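/- arXiv:1407.7638 — 3 statements merged into one kernel-verified Lean document; each statement's English description precedes it below -/
import Mathlib

section
/- Let A be a commutative ring and D : A → A a derivation. If a, b ∈ A satisfy D^{ν+1} a = 0 and D^{μ+1} b = 0, then D^{ν+μ}(a·b) = C(ν+μ, ν) · D^ν(a) · D^μ(b), where C(ν+μ, ν) is the binomial coefficient (regarded in A via the natural number cast). (This is the computation underlying the isomorphism gr_D(A) ≅ ⊕_ν m_ν(A) t^ν, sending the class of a in degree ν to (D^ν a / ν!) t^ν.) -/
/-! In the general Leibniz expansion of `D^(ν+μ) (a * b)` as a sum of multiples of `D^i a * D^j b`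
with `i + j = ν + μ`, every index pair other than `(ν, μ)` has `i > ν` or `j > μ`, so only one term
survives. -/

theorem iterate_eq_zero_of_le {M F : Type*} [Zero M] [FunLike F M M] [ZeroHomClass F M M] {f : F}
    {m n : ℕ} {x : M} (hmn : m ≤ n) (hx : f^[m] x = 0) : f^[n] x = 0 := by
  rw [← Nat.sub_add_cancel hmn, Function.iterate_add_apply, hx, iterate_map_zero]

section LeibnizRule

variable {A : Type*} [NonUnitalNonAssocSemiring A] {D : A →+ A}

open Finset in
theorem iterate_mul_eq_sum_antidiagonal (leibniz : ∀ a b, D (a * b) = D a * b + a * D b)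
    (n : ℕ) (a b : A) :
    D^[n] (a * b) = ∑ ij ∈ antidiagonal n, n.choose ij.1 • (D^[ij.1] a * D^[ij.2] b) := by
  induction n with
  | zero => simp
  | succ n ih =>
    rw [sum_antidiagonal_choose_succ_nsmul (fun i j => D^[i] a * D^[j] b) n]
    simp only [Function.iterate_succ_apply', ih, map_sum, map_nsmul, leibniz, nsmul_add,
      sum_add_distrib]
    rw [add_comm]
    congr 1
    refine sum_congr rfl fun ⟨i, j⟩ hij => ?_
    rw [Nat.choose_symm_of_eq_add (mem_antidiagonal.mp hij).symm]

theorem stmt3_general (leibniz : ∀ a b, D (a * b) = D a * b + a * D b) {ν μ : ℕ} {a b : A}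
    (ha : D^[ν + 1] a = 0) (hb : D^[μ + 1] b = 0) :
    D^[ν + μ] (a * b) = (ν + μ).choose ν • (D^[ν] a * D^[μ] b) := by
  rw [iterate_mul_eq_sum_antidiagonal leibniz]
  refine Finset.sum_eq_single_of_mem (ν, μ) (by simp) fun ⟨i, j⟩ hij hne => ?_
  have hij : i + j = ν + μ := Finset.HasAntidiagonal.mem_antidiagonal.mp hij
  have hlt : ν < i ∨ μ < j := by grind
  rcases hlt with hi | hj
  · rw [iterate_eq_zero_of_le hi ha, zero_mul, nsmul_zero]
  · rw [iterate_eq_zero_of_le hj hb, mul_zero, nsmul_zero]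

end LeibnizRule

/-- For a commutative ring `A` with a derivation `D : A → A`, if `D^{ν+1} a = 0`
and `D^{μ+1} b = 0`, then `D^{ν+μ}(a·b) = C(ν+μ, ν) · D^ν(a) · D^μ(b)`. -/
theorem stmt3 {A : Type*} [CommRing A] (D : Derivation ℤ A A) (ν μ : ℕ) (a b : A)
    (ha : (⇑D)^[ν + 1] a = 0) (hb : (⇑D)^[μ + 1] b = 0) :
    (⇑D)^[ν + μ] (a * b) = ((ν + μ).choose ν : A) * (⇑D)^[ν] a * (⇑D)^[μ] b := by
  rw [mul_assoc, ← nsmul_eq_mul]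
  exact stmt3_general (D := (D : A →ₗ[ℤ] A).toAddMonoidHom)
    (fun a b => by simp [mul_comm, add_comm]) ha hb
end

section
/- Let A be a commutative ℚ-algebra, D : A → A a locally nilpotent derivation, and let B, B' ⊆ A be D-stable subalgebras both containing ker D. Assume: (i) m_ν(B) = m_ν(B') for all ν ∈ ℕ; and (ii) the associated graded algebra of B is generated in degree 1, i.e. for every ν ≥ 1 the ideal m_ν(B) of the ring ker D equals the ν-th power ideal (m_1(B))^ν. Then B = B'. (An affine extension whose associated graded algebra is generated in degree 1 is uniquely determined by that graded algebra.) -/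
/-!
By the Leibniz rule the leading coefficients `m_ν(C)` of a subalgebra `C` over `ℚ` are
multiplicative: `m_μ(C) * m_ν(C) ⊆ m_{μ + ν}(C)`. If `b ∈ B` and `b' ∈ B'` have the same leading
coefficient in degree one, they differ by an element of `ker D ⊆ B'`, so `b` lies in
`E := B ⊓ B'`; hence `m_1(B) = m_1(E)`. As `m_1(B)` generates, `m_ν(B') = m_ν(B) ⊆ m_ν(E)` for all
`ν`, and nested submodules with the same leading coefficients coincide: subtract an element with the
same leading coefficient and induct on the order of nilpotency. Thus `B = E = B'`.
-/

section LeadingCoeffs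

open LinearMap

variable {R M : Type*} [Ring R] [AddCommGroup M] [Module R M]

/-- The leading coefficients `f ^ n c` of the elements `c ∈ N` killed by `f ^ (n + 1)`: the paper's
`m_n(N)`, for `f` a derivation and `N` a subalgebra. Only the module structure over the base ring is
recorded, not that of an ideal of `ker f`. -/
def leadingCoeffs (f : Module.End R M) (N : Submodule R M) (n : ℕ) : Submodule R M :=
  (N ⊓ ker (f ^ (n + 1))).map (f ^ n)

variable {f : Module.End R M} {S T : Submodule R M} {n : ℕ} {x : M}

lemma mem_leadingCoeffs :
    x ∈ leadingCoeffs f S n ↔ ∃ c ∈ S, f^[n + 1] c = 0 ∧ f^[n] c = x := by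
  simp only [leadingCoeffs, Submodule.mem_map, Submodule.mem_inf, mem_ker, Module.End.pow_apply,
    and_assoc]

lemma leadingCoeffs_zero : leadingCoeffs f S 0 = S ⊓ ker f := by
  simp only [leadingCoeffs, zero_add, pow_one, pow_zero, Module.End.one_eq_id, Submodule.map_id]

lemma leadingCoeffs_inf_leadingCoeffs_le (hT : ker (f ^ n) ≤ T) :
    leadingCoeffs f S n ⊓ leadingCoeffs f T n ≤ leadingCoeffs f (S ⊓ T) n := by
  rintro _ ⟨⟨s, ⟨hs, hs₀⟩, rfl⟩, t, ⟨ht, -⟩, hts⟩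
  have hsub : s - t ∈ T := hT (sub_mem_ker_iff.mpr hts.symm)
  exact ⟨s, ⟨⟨hs, (T.sub_mem_iff_left ht).mp hsub⟩, hs₀⟩, rfl⟩

lemma le_of_leadingCoeffs_le (hnil : ∀ s ∈ S, ∃ k : ℕ, f^[k] s = 0) (hTS : T ≤ S)
    (h : ∀ n, leadingCoeffs f S n ≤ leadingCoeffs f T n) : S ≤ T := by
  have mem_of_iterate_eq_zero : ∀ k, ∀ s ∈ S, f^[k] s = 0 → s ∈ T := by
    intro k
    induction k with
    | zero => rintro _ - rfl; exact T.zero_mem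
    | succ k ih =>
      intro s hs hk
      obtain ⟨t, ht, -, hts⟩ := mem_leadingCoeffs.mp (h k (mem_leadingCoeffs.mpr ⟨s, hs, hk, rfl⟩))
      have hsub : s - t ∈ T :=
        ih _ (S.sub_mem hs (hTS ht)) (by rw [iterate_map_sub, hts, sub_self])
      exact (T.sub_mem_iff_left ht).mp hsub
  intro s hs
  obtain ⟨k, hk⟩ := hnil s hs
  exact mem_of_iterate_eq_zero k s hs hk

end LeadingCoeffs

section Leibniz

open Finset

variable {R A : Type*} [CommSemiring R] [CommSemiring A] [Algebra R A] (D : Derivation R A A)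

lemma iterate_derivation_mul (n : ℕ) (a b : A) :
    D^[n] (a * b) = ∑ ij ∈ antidiagonal n, n.choose ij.1 • (D^[ij.1] a * D^[ij.2] b) := by
  induction n with
  | zero => simp
  | succ n ih =>
    rw [sum_antidiagonal_choose_succ_nsmul (fun i j => D^[i] a * D^[j] b) n,
      Function.iterate_succ_apply', ih, map_sum, ← sum_add_distrib]
    refine sum_congr rfl fun ij hij => ?_
    rw [n.choose_symm_of_eq_add (HasAntidiagonal.mem_antidiagonal.mp hij).symm, map_nsmul,
      D.leibniz, Function.iterate_succ_apply', Function.iterate_succ_apply', smul_eq_mul,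
      smul_eq_mul, mul_comm (D^[ij.2] b), nsmul_add]

variable {D} {m n i j : ℕ} {a b : A}

lemma iterate_derivation_eq_zero_of_le (hmi : m ≤ i) (ha : D^[m] a = 0) : D^[i] a = 0 := by
  rw [← D.coeFn_coe, ← Module.End.pow_apply] at ha ⊢
  exact Module.End.pow_map_zero_of_le hmi ha

lemma iterate_mul_iterate_derivation_eq_zero (ha : D^[m + 1] a = 0) (hb : D^[n + 1] b = 0)
    (hij : m < i ∨ n < j) : D^[i] a * D^[j] b = 0 := by
  obtain hi | hj := hij
  · rw [iterate_derivation_eq_zero_of_le hi ha, zero_mul]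
  · rw [iterate_derivation_eq_zero_of_le hj hb, mul_zero]

lemma iterate_derivation_mul_eq_zero (ha : D^[m + 1] a = 0) (hb : D^[n + 1] b = 0) :
    D^[m + n + 1] (a * b) = 0 := by
  rw [iterate_derivation_mul]
  refine sum_eq_zero fun ij hij => ?_
  rw [HasAntidiagonal.mem_antidiagonal] at hij
  rw [iterate_mul_iterate_derivation_eq_zero ha hb (by lia), smul_zero]

lemma iterate_add_derivation_mul (ha : D^[m + 1] a = 0) (hb : D^[n + 1] b = 0) :
    D^[m + n] (a * b) = (m + n).choose m • (D^[m] a * D^[n] b) := by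
  rw [iterate_derivation_mul]
  refine sum_eq_single_of_mem (m, n) (HasAntidiagonal.mem_antidiagonal.mpr rfl)
    fun ij hij hne => ?_
  rw [HasAntidiagonal.mem_antidiagonal] at hij
  rw [Ne, Prod.ext_iff] at hne
  rw [iterate_mul_iterate_derivation_eq_zero ha hb (by lia), smul_zero]

end Leibniz

open scoped Pointwise in
lemma prod_mem_submodule_pow_card {R A ι : Type*} [CommSemiring R] [CommSemiring A] [Algebra R A]
    {N : Submodule R A} {s : Finset ι} {g : ι → A} (hg : ∀ i ∈ s, g i ∈ N) :
    ∏ i ∈ s, g i ∈ N ^ s.card := by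
  have hprod := Set.finsetProd_mem_finsetProd s (fun _ => (N : Set A)) g hg
  rw [Finset.prod_const] at hprod
  exact Submodule.pow_subset_pow N hprod

section Subalgebra

open LinearMap Subalgebra

variable {R A : Type*} [CommRing R] [Algebra ℚ R] [CommRing A] [Algebra R A]
  (D : Derivation R A A)

lemma leadingCoeffs_mul_le (C : Subalgebra R A) (m n : ℕ) :
    leadingCoeffs ↑D (toSubmodule C) m * leadingCoeffs ↑D (toSubmodule C) n ≤
      leadingCoeffs ↑D (toSubmodule C) (m + n) := by
  refine Submodule.mul_le.mpr fun x hx y hy => ?_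
  obtain ⟨a, ha, ha₀, rfl⟩ := mem_leadingCoeffs.mp hx
  obtain ⟨b, hb, hb₀, rfl⟩ := mem_leadingCoeffs.mp hy
  have hunit : IsUnit ((m + n).choose m : R) := by
    have hchoose : ((m + n).choose m : ℚ) ≠ 0 :=
      Nat.cast_ne_zero.mpr (Nat.choose_pos (Nat.le_add_right m n)).ne'
    simpa only [map_natCast] using hchoose.isUnit.map (algebraMap ℚ R)
  rw [← Submodule.smul_mem_iff_of_isUnit _ hunit, Nat.cast_smul_eq_nsmul, mem_leadingCoeffs]
  exact ⟨a * b, C.mul_mem ha hb, iterate_derivation_mul_eq_zero ha₀ hb₀,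
    iterate_add_derivation_mul ha₀ hb₀⟩

variable {D}

lemma ker_mul_leadingCoeffs_one_pow_le {C : Subalgebra R A}
    (hC : ker (D : A →ₗ[R] A) ≤ toSubmodule C) (n : ℕ) :
    ker (D : A →ₗ[R] A) * leadingCoeffs ↑D (toSubmodule C) 1 ^ n ≤
      leadingCoeffs ↑D (toSubmodule C) n := by
  induction n with
  | zero => rw [pow_zero, mul_one, leadingCoeffs_zero, inf_eq_right.mpr hC]
  | succ n ih =>
    rw [pow_succ, ← mul_assoc]
    exact (mul_le_mul_left ih _).trans (leadingCoeffs_mul_le D C n 1)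

theorem eq_of_leadingCoeffs_eq {B B' : Subalgebra R A}
    (hnil : ∀ b ∈ B, ∃ k : ℕ, D^[k] b = 0) (hnil' : ∀ b ∈ B', ∃ k : ℕ, D^[k] b = 0)
    (hB : ker (D : A →ₗ[R] A) ≤ toSubmodule B) (hB' : ker (D : A →ₗ[R] A) ≤ toSubmodule B')
    (heq : ∀ n, leadingCoeffs ↑D (toSubmodule B) n = leadingCoeffs ↑D (toSubmodule B') n)
    (hgen : ∀ n, leadingCoeffs ↑D (toSubmodule B) n ≤
      ker (D : A →ₗ[R] A) * leadingCoeffs ↑D (toSubmodule B) 1 ^ n) :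
    B = B' := by
  have hone : leadingCoeffs ↑D (toSubmodule B) 1 ≤ leadingCoeffs ↑D (toSubmodule (B ⊓ B')) 1 :=
    (le_inf le_rfl (heq 1).le).trans (leadingCoeffs_inf_leadingCoeffs_le (by rwa [pow_one]))
  have hinf (n : ℕ) :
      leadingCoeffs ↑D (toSubmodule B) n ≤ leadingCoeffs ↑D (toSubmodule (B ⊓ B')) n :=
    calc leadingCoeffs ↑D (toSubmodule B) n
      _ ≤ ker (D : A →ₗ[R] A) * leadingCoeffs ↑D (toSubmodule B) 1 ^ n := hgen n
      _ ≤ ker (D : A →ₗ[R] A) * leadingCoeffs ↑D (toSubmodule (B ⊓ B')) 1 ^ n := by gcongr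
      _ ≤ leadingCoeffs ↑D (toSubmodule (B ⊓ B')) n :=
        ker_mul_leadingCoeffs_one_pow_le (le_inf hB hB') n
  have hle : toSubmodule B ≤ toSubmodule (B ⊓ B') :=
    le_of_leadingCoeffs_le hnil (fun _ => And.left) hinf
  have hle' : toSubmodule B' ≤ toSubmodule (B ⊓ B') :=
    le_of_leadingCoeffs_le hnil' (fun _ => And.right) fun n => (heq n).ge.trans (hinf n)
  exact le_antisymm (fun b hb => (hle hb).2) fun b hb => (hle' hb).1

end Subalgebra

theorem stmt5_general {A : Type*} [CommRing A] [Algebra ℚ A] (D : Derivation ℚ A A)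
    (B B' : Subalgebra ℚ A)
    (hln : ∀ b ∈ B, ∃ k : ℕ, (⇑D)^[k] b = 0) (hln' : ∀ b ∈ B', ∃ k : ℕ, (⇑D)^[k] b = 0)
    (hkB : ∀ a : A, D a = 0 → a ∈ B) (hkB' : ∀ a : A, D a = 0 → a ∈ B')
    (m : Subalgebra ℚ A → ℕ → Set A)
    (hm : ∀ (C : Subalgebra ℚ A) (ν : ℕ),
      m C ν = {s : A | ∃ c ∈ C, (⇑D)^[ν + 1] c = 0 ∧ (⇑D)^[ν] c = s})
    (heq : ∀ ν : ℕ, m B ν = m B' ν)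
    (hgen : ∀ ν : ℕ, 1 ≤ ν → m B ν =
      ↑(AddSubgroup.closure {s : A | ∃ (e : A) (g : Fin ν → A),
          D e = 0 ∧ (∀ i, g i ∈ m B 1) ∧ s = e * ∏ i, g i})) :
    B = B' := by
  have hm_coe (C : Subalgebra ℚ A) (ν : ℕ) :
      m C ν = leadingCoeffs ↑D (Subalgebra.toSubmodule C) ν := by
    ext s
    simp only [hm, Set.mem_ofPred_eq, SetLike.mem_coe, mem_leadingCoeffs, Derivation.coeFn_coe,
      Subalgebra.mem_toSubmodule]
  simp only [hm_coe, SetLike.coe_set_eq] at heq hgen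
  refine eq_of_leadingCoeffs_eq hln hln' hkB hkB' heq ?_
  rintro (_ | ν) s hs
  · rw [leadingCoeffs_zero] at hs
    rw [pow_zero, mul_one]
    exact hs.2
  · rw [← SetLike.mem_coe, hgen _ ν.succ_pos] at hs
    refine (AddSubgroup.closure_le (LinearMap.ker (D : A →ₗ[ℚ] A) *
      leadingCoeffs ↑D (Subalgebra.toSubmodule B) 1 ^ (ν + 1)).toAddSubgroup).mpr ?_ hs
    rintro _ ⟨e, g, he, hg, rfl⟩
    have hprod : ∏ i, g i ∈ leadingCoeffs ↑D (Subalgebra.toSubmodule B) 1 ^ (ν + 1) := by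
      simpa only [Finset.card_fin] using
        prod_mem_submodule_pow_card (s := Finset.univ) fun i _ => hg i
    exact Submodule.mul_mem_mul he hprod

/-- Let `A` be a commutative ℚ-algebra, `D : A → A` a locally nilpotent
derivation, and `B, B' ⊆ A` `D`-stable subalgebras both containing `ker D`.  If
`m_ν(B) = m_ν(B')` for all `ν`, and the associated graded algebra of `B` is generated in
degree one, i.e. `m_ν(B)` equals the `ν`-th power of the ideal `m_1(B)` of `ker D`
(finite sums of elements `e·g₁⋯g_ν` with `e ∈ ker D` and `gᵢ ∈ m_1(B)`) for all `ν ≥ 1`,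
then `B = B'`. -/
theorem stmt5 {A : Type*} [CommRing A] [Algebra ℚ A] (D : Derivation ℚ A A)
    (hln : ∀ a : A, ∃ k : ℕ, (⇑D)^[k] a = 0)
    (B B' : Subalgebra ℚ A)
    (hB : ∀ b ∈ B, D b ∈ B) (hB' : ∀ b ∈ B', D b ∈ B')
    (hkB : ∀ a : A, D a = 0 → a ∈ B) (hkB' : ∀ a : A, D a = 0 → a ∈ B')
    (m : Subalgebra ℚ A → ℕ → Set A)
    (hm : ∀ (C : Subalgebra ℚ A) (ν : ℕ),
      m C ν = {s : A | ∃ c ∈ C, (⇑D)^[ν + 1] c = 0 ∧ (⇑D)^[ν] c = s})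
    (heq : ∀ ν : ℕ, m B ν = m B' ν)
    (hgen : ∀ ν : ℕ, 1 ≤ ν → m B ν =
      ↑(AddSubgroup.closure {s : A | ∃ (e : A) (g : Fin ν → A),
          D e = 0 ∧ (∀ i, g i ∈ m B 1) ∧ s = e * ∏ i, g i})) :
    B = B' := by
  exact stmt5_general D B B' (fun b _ => hln b) (fun b _ => hln b) hkB hkB' m hm heq hgen
end

section
/- Let A := ℂ[X,Y,U,V]/⟨XV − YU − 1⟩ with x, y, u, v the images of X, Y, U, V, and let D : A → A be the ℂ-derivation with D x = D y = 0, D u = x, D v = y. For every ν ∈ ℕ, the kernel of D^{ν+1} equals the ℂ-linear span of the images of the monomials x^i y^j u^k v^ℓ with k + ℓ ≤ ν. -/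
/-!
Write `F n` for the span of the monomials `x ^ i * y ^ j * u ^ k * v ^ l` with `k + l ≤ n`. As `D`
maps `F (n + 1)` into `F n` and kills `F 0`, the space `F n` is annihilated by `D ^ (n + 1)`.

For the converse, `F` exhausts the algebra, so it is enough that `D ^ (n + 1)` is injective on
`F (n + 1) / F n`. If `k + l = n + 1`, then `D ^ (n + 1)` sends `x ^ i * y ^ j * u ^ k * v ^ l` to
`(n + 1)! • (x ^ (i + k) * y ^ (j + l))`, while the relation `x * v - y * u = 1` shows that modulo
`F n` this monomial depends only on the exponents `i + k` and `j + l`. So the class of an element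
of `F (n + 1)` is determined by a polynomial `p` in two variables for which `D ^ (n + 1)` returns
`(n + 1)! • p(x, y)`, and `x`, `y` are algebraically independent.
-/

open MvPolynomial

noncomputable section

/-- The ideal `⟨XV − YU − 1⟩` of `ℂ[X, Y, U, V]` (with `X = X 0`, `Y = X 1`, `U = X 2`,
`V = X 3`). -/
def sl2Ideal : Ideal (MvPolynomial (Fin 4) ℂ) :=
  Ideal.span {X 0 * X 3 - X 1 * X 2 - 1}

/-- The coordinate ring `A = ℂ[X,Y,U,V]/⟨XV − YU − 1⟩` of `SL₂` over `ℂ`. -/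
abbrev SL2R : Type := MvPolynomial (Fin 4) ℂ ⧸ sl2Ideal

/-- `x`, the image of `X` in `A`. -/
def sx : SL2R := Ideal.Quotient.mk sl2Ideal (X 0)
/-- `y`, the image of `Y` in `A`. -/
def sy : SL2R := Ideal.Quotient.mk sl2Ideal (X 1)
/-- `u`, the image of `U` in `A`. -/
def su : SL2R := Ideal.Quotient.mk sl2Ideal (X 2)
/-- `v`, the image of `V` in `A`. -/
def sv : SL2R := Ideal.Quotient.mk sl2Ideal (X 3)

section Filtration

variable {R M : Type*} [Semiring R] [AddCommMonoid M] [Module R M] {f : Module.End R M}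
  {F : ℕ → Submodule R M}

lemma le_ker_pow_succ_of_le_comap (hzero : F 0 ≤ LinearMap.ker f)
    (hsucc : ∀ n, F (n + 1) ≤ (F n).comap f) (n : ℕ) : F n ≤ LinearMap.ker (f ^ (n + 1)) := by
  induction n with
  | zero => simpa only [zero_add, pow_one] using hzero
  | succ n ih =>
    rw [pow_succ]
    exact (hsucc n).trans (Submodule.comap_mono ih)

lemma inf_ker_pow_succ_le (hmono : Monotone F)
    (hlead : ∀ n, F (n + 1) ⊓ LinearMap.ker (f ^ (n + 1)) ≤ F n) (m n : ℕ) :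
    F m ⊓ LinearMap.ker (f ^ (n + 1)) ≤ F n := by
  induction m with
  | zero => exact inf_le_left.trans (hmono (Nat.zero_le n))
  | succ m ih =>
    rcases le_or_gt (m + 1) n with hmn | hnm
    · exact inf_le_left.trans (hmono hmn)
    · rintro a ⟨haF, haker⟩
      have haker' : a ∈ LinearMap.ker (f ^ (m + 1)) :=
        Module.End.pow_map_zero_of_le (by omega) haker
      exact ih ⟨hlead m ⟨haF, haker'⟩, haker⟩

theorem ker_pow_succ_eq_of_filtration (hmono : Monotone F) (hexh : ∀ a, ∃ n, a ∈ F n)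
    (hzero : F 0 ≤ LinearMap.ker f) (hsucc : ∀ n, F (n + 1) ≤ (F n).comap f)
    (hlead : ∀ n, F (n + 1) ⊓ LinearMap.ker (f ^ (n + 1)) ≤ F n) (n : ℕ) :
    LinearMap.ker (f ^ (n + 1)) = F n := by
  refine le_antisymm (fun a ha => ?_) (le_ker_pow_succ_of_le_comap hzero hsucc n)
  obtain ⟨m, hm⟩ := hexh a
  exact inf_ker_pow_succ_le hmono hlead m n ⟨hm, ha⟩

end Filtration

section UVDegree

variable (R : Type*) {A : Type*} [CommRing R] [CommRing A] [Algebra R A] (x y u v : A)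

/-- The span of the monomials in `x, y, u, v` of degree at most `n` in `u` and `v` together: the
`n`-th step of the filtration of `A` by `(u, v)`-degree. -/
def uvDegreeLE (n : ℕ) : Submodule R A :=
  Submodule.span R {a : A | ∃ i j k l : ℕ, k + l ≤ n ∧ a = x ^ i * y ^ j * u ^ k * v ^ l}

variable {x y u v}

lemma monomial_mem_uvDegreeLE {n : ℕ} (i j : ℕ) {k l : ℕ} (hkl : k + l ≤ n) :
    x ^ i * y ^ j * u ^ k * v ^ l ∈ uvDegreeLE R x y u v n :=
  Submodule.subset_span ⟨i, j, k, l, hkl, rfl⟩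

variable {R}

lemma uvDegreeLE_le_iff {n : ℕ} {N : Submodule R A} :
    uvDegreeLE R x y u v n ≤ N ↔
      ∀ i j k l : ℕ, k + l ≤ n → x ^ i * y ^ j * u ^ k * v ^ l ∈ N := by
  rw [uvDegreeLE, Submodule.span_le]
  constructor
  · exact fun h i j k l hkl => h ⟨i, j, k, l, hkl, rfl⟩
  · rintro h _ ⟨i, j, k, l, hkl, rfl⟩
    exact h i j k l hkl

lemma uvDegreeLE_mono : Monotone (uvDegreeLE R x y u v) := fun _ _ hmn =>
  uvDegreeLE_le_iff.2 fun i j _ _ hkl => monomial_mem_uvDegreeLE R i j (hkl.trans hmn)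

lemma exists_mem_uvDegreeLE
    (hgen : Function.Surjective (aeval ![x, y, u, v] : MvPolynomial (Fin 4) R →ₐ[R] A)) (a : A) :
    ∃ n, a ∈ uvDegreeLE R x y u v n := by
  obtain ⟨p, rfl⟩ := hgen a
  induction p using MvPolynomial.induction_on' with
  | monomial s c =>
    refine ⟨s 2 + s 3, ?_⟩
    rw [aeval_monomial, Finsupp.prod_fintype _ _ fun _ => pow_zero _, Fin.prod_univ_four,
      ← Algebra.smul_def]
    exact Submodule.smul_mem _ c (monomial_mem_uvDegreeLE R _ _ le_rfl)
  | add p q hp hq =>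
    obtain ⟨m, hm⟩ := hp
    obtain ⟨n, hn⟩ := hq
    refine ⟨max m n, ?_⟩
    rw [map_add]
    exact add_mem (uvDegreeLE_mono (le_max_left m n) hm) (uvDegreeLE_mono (le_max_right m n) hn)

end UVDegree

section Reduced

variable {R A : Type*} [CommRing R] [CommRing A] [Algebra R A] {x y u v : A}

/-- The monomial `x ^ i * y ^ j * u ^ k * v ^ l` with `k + l = n`, `i + k = a`, `j + l = b` and `k`
as large as possible. It represents all monomials with these three sums modulo lower
`(u, v)`-degree. The truncated subtractions are the intended ones only for `n ≤ a + b`. -/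
def reducedMonomial (x y u v : A) (n a b : ℕ) : A :=
  x ^ (a - n) * y ^ (b - (n - a)) * u ^ min a n * v ^ (n - a)

variable (R) in
lemma monomial_sub_reducedMonomial_mem (hdet : x * v - y * u = 1) {n : ℕ} (i j : ℕ) {k l : ℕ}
    (hkl : k + l = n + 1) :
    x ^ i * y ^ j * u ^ k * v ^ l - reducedMonomial x y u v (n + 1) (i + k) (j + l) ∈
      uvDegreeLE R x y u v n := by
  -- Since `x * v = y * u + 1`, a factor `x * v` can be traded for `y * u` modulo lower degree,
  -- until `x` or `v` is used up.
  induction i generalizing j k l with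
  | zero =>
    have hk : min k (n + 1) = k := by omega
    have hl : n + 1 - k = l := by omega
    simp [reducedMonomial, hk, hl, show k - (n + 1) = 0 by omega]
  | succ i ih =>
    cases l with
    | zero =>
      obtain rfl : k = n + 1 := hkl
      simp [reducedMonomial]
    | succ l =>
      have htrade : x ^ (i + 1) * y ^ j * u ^ k * v ^ (l + 1) =
          x ^ i * y ^ j * u ^ k * v ^ l + x ^ i * y ^ (j + 1) * u ^ (k + 1) * v ^ l := by
        linear_combination (x ^ i * y ^ j * u ^ k * v ^ l) * hdet
      have hlower : x ^ i * y ^ j * u ^ k * v ^ l ∈ uvDegreeLE R x y u v n :=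
        monomial_mem_uvDegreeLE R i j (by omega)
      rw [htrade, add_sub_assoc, show i + 1 + k = i + (k + 1) by omega,
        show j + (l + 1) = j + 1 + l by omega]
      exact add_mem hlower (ih (j + 1) (by omega))

variable (R) in
/-- The linear map sending `X ^ a * Y ^ b` to `reducedMonomial x y u v n a b`; it lifts the symbol
of an element of `(u, v)`-degree `n` back to `A`. -/
def reducedMap (x y u v : A) (n : ℕ) : MvPolynomial (Fin 2) R →ₗ[R] A :=
  (basisMonomials (Fin 2) R).constr R fun s => reducedMonomial x y u v n (s 0) (s 1)

lemma reducedMap_monomial_one (n : ℕ) (s : Fin 2 →₀ ℕ) :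
    reducedMap R x y u v n (monomial s 1) = reducedMonomial x y u v n (s 0) (s 1) :=
  (basisMonomials (Fin 2) R).constr_basis R _ s

end Reduced

/-- The derivation `D` is the infinitesimal generator of the `𝔾ₐ`-action
`(x, y, u, v) ↦ (x, y, u + t x, v + t y)`, i.e. of right multiplication by shear matrices. -/
structure IsShear {R A : Type*} [CommRing R] [CommRing A] [Algebra R A] (D : Derivation R A A)
    (x y u v : A) : Prop where
  map_x : D x = 0
  map_y : D y = 0
  map_u : D u = x
  map_v : D v = y

namespace IsShear

variable {R A : Type*} [CommRing R] [CommRing A] [Algebra R A] {D : Derivation R A A}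
  {x y u v : A}

lemma map_monomial (h : IsShear D x y u v) (i j k l : ℕ) :
    D (x ^ i * y ^ j * u ^ k * v ^ l) =
      k • (x ^ (i + 1) * y ^ j * u ^ (k - 1) * v ^ l) +
        l • (x ^ i * y ^ (j + 1) * u ^ k * v ^ (l - 1)) := by
  simp only [Derivation.leibniz, Derivation.leibniz_pow, h.map_x, h.map_y, h.map_u, h.map_v,
    smul_eq_mul, nsmul_eq_mul]
  ring

lemma uvDegreeLE_zero_le_ker (h : IsShear D x y u v) :
    uvDegreeLE R x y u v 0 ≤ LinearMap.ker (D : A →ₗ[R] A) :=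
  uvDegreeLE_le_iff.2 fun i j k l hkl => by
    obtain ⟨rfl, rfl⟩ : k = 0 ∧ l = 0 := by omega
    rw [LinearMap.mem_ker, Derivation.coeFn_coe, h.map_monomial, zero_smul, zero_smul, add_zero]

lemma uvDegreeLE_succ_le_comap (h : IsShear D x y u v) (n : ℕ) :
    uvDegreeLE R x y u v (n + 1) ≤ (uvDegreeLE R x y u v n).comap (D : A →ₗ[R] A) :=
  uvDegreeLE_le_iff.2 fun i j k l hkl => by
    rw [Submodule.mem_comap, Derivation.coeFn_coe, h.map_monomial]
    refine add_mem ?_ ?_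
    · rcases k with _ | k
      · simp only [zero_smul, zero_mem]
      · exact nsmul_mem (monomial_mem_uvDegreeLE R _ _ (by omega)) _
    · rcases l with _ | l
      · simp only [zero_smul, zero_mem]
      · exact nsmul_mem (monomial_mem_uvDegreeLE R _ _ (by omega)) _

lemma pow_monomial (h : IsShear D x y u v) {n : ℕ} (i j : ℕ) {k l : ℕ} (hkl : k + l = n) :
    ((D : A →ₗ[R] A) ^ n) (x ^ i * y ^ j * u ^ k * v ^ l) =
      n.factorial • (x ^ (i + k) * y ^ (j + l)) := by
  induction n generalizing i j k l with
  | zero =>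
    obtain ⟨rfl, rfl⟩ : k = 0 ∧ l = 0 := by omega
    simp
  | succ n ih =>
    have hu : k • ((D : A →ₗ[R] A) ^ n) (x ^ (i + 1) * y ^ j * u ^ (k - 1) * v ^ l) =
        k • n.factorial • (x ^ (i + k) * y ^ (j + l)) := by
      rcases k with _ | k
      · simp only [zero_smul]
      · rw [Nat.add_sub_cancel, ih _ _ (by omega), show i + 1 + k = i + (k + 1) by omega]
    have hv : l • ((D : A →ₗ[R] A) ^ n) (x ^ i * y ^ (j + 1) * u ^ k * v ^ (l - 1)) =
        l • n.factorial • (x ^ (i + k) * y ^ (j + l)) := by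
      rcases l with _ | l
      · simp only [zero_smul]
      · rw [Nat.add_sub_cancel, ih _ _ (by omega), show j + 1 + l = j + (l + 1) by omega]
    rw [pow_succ, Module.End.mul_apply, Derivation.coeFn_coe, h.map_monomial, map_add, map_nsmul,
      map_nsmul, hu, hv, ← add_smul, hkl, smul_smul, Nat.factorial_succ]

lemma exists_symbol_monomial (h : IsShear D x y u v) (hdet : x * v - y * u = 1) {n : ℕ} (i j : ℕ)
    {k l : ℕ} (hkl : k + l ≤ n + 1) :
    ∃ p : MvPolynomial (Fin 2) R,
      ((D : A →ₗ[R] A) ^ (n + 1)) (x ^ i * y ^ j * u ^ k * v ^ l) =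
          (n + 1).factorial • aeval ![x, y] p ∧
        x ^ i * y ^ j * u ^ k * v ^ l - reducedMap R x y u v (n + 1) p ∈
          uvDegreeLE R x y u v n := by
  rcases hkl.lt_or_eq with hlt | heq
  · have hlower : x ^ i * y ^ j * u ^ k * v ^ l ∈ uvDegreeLE R x y u v n :=
      monomial_mem_uvDegreeLE R i j (by omega)
    have hker := le_ker_pow_succ_of_le_comap h.uvDegreeLE_zero_le_ker h.uvDegreeLE_succ_le_comap n
      hlower
    refine ⟨0, ?_, ?_⟩
    · rw [LinearMap.mem_ker.1 hker, map_zero, smul_zero]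
    · rwa [map_zero, sub_zero]
  · let s : Fin 2 →₀ ℕ := Finsupp.equivFunOnFinite.symm ![i + k, j + l]
    refine ⟨monomial s 1, ?_, ?_⟩
    · rw [h.pow_monomial i j heq, aeval_monomial, map_one, one_mul,
        Finsupp.prod_fintype _ _ fun _ => pow_zero _, Fin.prod_univ_two]
      rfl
    · rw [reducedMap_monomial_one]
      exact monomial_sub_reducedMonomial_mem R hdet i j heq

lemma exists_symbol (h : IsShear D x y u v) (hdet : x * v - y * u = 1) {n : ℕ} {a : A}
    (ha : a ∈ uvDegreeLE R x y u v (n + 1)) :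
    ∃ p : MvPolynomial (Fin 2) R,
      ((D : A →ₗ[R] A) ^ (n + 1)) a = (n + 1).factorial • aeval ![x, y] p ∧
        a - reducedMap R x y u v (n + 1) p ∈ uvDegreeLE R x y u v n := by
  induction ha using Submodule.span_induction with
  | mem a ha =>
    obtain ⟨i, j, k, l, hkl, rfl⟩ := ha
    exact h.exists_symbol_monomial hdet i j hkl
  | zero =>
    refine ⟨0, ?_, ?_⟩
    · simp only [map_zero, smul_zero]
    · simp only [map_zero, sub_zero, zero_mem]
  | add a b _ _ iha ihb =>
    obtain ⟨p, hDp, hp⟩ := iha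
    obtain ⟨q, hDq, hq⟩ := ihb
    refine ⟨p + q, ?_, ?_⟩
    · rw [map_add, hDp, hDq, map_add, smul_add]
    · rw [map_add, add_sub_add_comm]
      exact add_mem hp hq
  | smul c a _ iha =>
    obtain ⟨p, hDp, hp⟩ := iha
    refine ⟨c • p, ?_, ?_⟩
    · rw [map_smul, hDp, map_smul, smul_comm]
    · rw [map_smul, ← smul_sub]
      exact Submodule.smul_mem _ c hp

lemma uvDegreeLE_succ_inf_ker_le [IsAddTorsionFree R] (h : IsShear D x y u v)
    (hdet : x * v - y * u = 1) (hxy : AlgebraicIndependent R ![x, y]) (n : ℕ) :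
    uvDegreeLE R x y u v (n + 1) ⊓ LinearMap.ker ((D : A →ₗ[R] A) ^ (n + 1)) ≤
      uvDegreeLE R x y u v n := by
  rintro a ⟨ha, hDa⟩
  obtain ⟨p, hDp, hp⟩ := h.exists_symbol hdet ha
  have haeval : aeval ![x, y] ((n + 1).factorial • p) = 0 := by
    rw [map_nsmul, ← hDp, LinearMap.mem_ker.1 hDa]
  have hp_zero : p = 0 := by
    ext s
    have hcoeff : (n + 1).factorial • coeff s p = 0 := by
      rw [← coeff_smul, hxy.eq_zero_of_aeval_eq_zero _ haeval, coeff_zero]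
    exact (smul_eq_zero.1 hcoeff).resolve_left (Nat.factorial_ne_zero _)
  rwa [hp_zero, map_zero, sub_zero] at hp

end IsShear

theorem stmt8_general {R A : Type*} [CommRing R] [IsAddTorsionFree R] [CommRing A] [Algebra R A]
    {x y u v : A}
    (hgen : Function.Surjective (aeval ![x, y, u, v] : MvPolynomial (Fin 4) R →ₐ[R] A))
    (hdet : x * v - y * u = 1) (hxy : AlgebraicIndependent R ![x, y]) (D : Derivation R A A)
    (hx : D x = 0) (hy : D y = 0) (hu : D u = x) (hv : D v = y) (ν : ℕ) :
    {a : A | (⇑D)^[ν + 1] a = 0} =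
      ↑(Submodule.span R {a : A | ∃ i j k l : ℕ,
          k + l ≤ ν ∧ a = x ^ i * y ^ j * u ^ k * v ^ l}) := by
  have hD : IsShear D x y u v := ⟨hx, hy, hu, hv⟩
  have hker : LinearMap.ker ((D : A →ₗ[R] A) ^ (ν + 1)) = uvDegreeLE R x y u v ν :=
    ker_pow_succ_eq_of_filtration uvDegreeLE_mono (exists_mem_uvDegreeLE hgen)
      hD.uvDegreeLE_zero_le_ker hD.uvDegreeLE_succ_le_comap
      (hD.uvDegreeLE_succ_inf_ker_le hdet hxy) ν
  rw [← uvDegreeLE, ← hker]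
  ext a
  rw [Set.mem_ofPred_eq, SetLike.mem_coe, LinearMap.mem_ker, Module.End.pow_apply,
    Derivation.coeFn_coe]

lemma aeval_eq_mk_sl2Ideal (p : MvPolynomial (Fin 4) ℂ) :
    aeval ![sx, sy, su, sv] p = Ideal.Quotient.mk sl2Ideal p := by
  have heq : aeval ![sx, sy, su, sv] = Ideal.Quotient.mkₐ ℂ sl2Ideal := by
    ext i
    rw [aeval_X]
    fin_cases i <;> rfl
  exact DFunLike.congr_fun heq p

lemma aeval_sl2_surjective :
    Function.Surjective (aeval ![sx, sy, su, sv] : MvPolynomial (Fin 4) ℂ →ₐ[ℂ] SL2R) := fun a => by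
  obtain ⟨p, rfl⟩ := Ideal.Quotient.mk_surjective a
  exact ⟨p, aeval_eq_mk_sl2Ideal p⟩

lemma sl2_det_eq_one : sx * sv - sy * su = 1 := by
  have h : Ideal.Quotient.mk sl2Ideal (X 0 * X 3 - X 1 * X 2 - 1) = 0 :=
    Ideal.Quotient.eq_zero_iff_mem.2 (Ideal.mem_span_singleton_self _)
  rw [map_sub, map_sub, map_mul, map_mul, map_one] at h
  exact sub_eq_zero.1 h

/-- The point of `SL₂` with coordinates `a, b, c, d` in a `ℂ`-algebra, viewed as an algebra map out
of the coordinate ring. -/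
def sl2Lift {B : Type*} [CommRing B] [Algebra ℂ B] (a b c d : B) (h : a * d - b * c = 1) :
    SL2R →ₐ[ℂ] B :=
  Ideal.Quotient.liftₐ sl2Ideal (aeval ![a, b, c, d]) <| by
    have hle : sl2Ideal ≤ RingHom.ker (aeval ![a, b, c, d] : MvPolynomial (Fin 4) ℂ →ₐ[ℂ] B) := by
      rw [sl2Ideal, Ideal.span_singleton_le_iff_mem, RingHom.mem_ker]
      simp [h]
    exact hle

lemma sl2Lift_sx {B : Type*} [CommRing B] [Algebra ℂ B] {a b c d : B} (h : a * d - b * c = 1) :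
    sl2Lift a b c d h sx = a :=
  aeval_X ![a, b, c, d] 0

lemma sl2Lift_sy {B : Type*} [CommRing B] [Algebra ℂ B] {a b c d : B} (h : a * d - b * c = 1) :
    sl2Lift a b c d h sy = b :=
  aeval_X ![a, b, c, d] 1

lemma algebraicIndependent_sx_sy : AlgebraicIndependent ℂ ![sx, sy] := by
  -- Evaluate at the point `(X, Y, 0, X⁻¹)` of `SL₂` over the field of rational functions.
  let K := FractionRing (MvPolynomial (Fin 2) ℂ)
  let ι : MvPolynomial (Fin 2) ℂ →ₐ[ℂ] K := IsScalarTower.toAlgHom ℂ _ K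
  have hι : Function.Injective ι := IsFractionRing.injective _ K
  have hX : ι (X 0) ≠ 0 := (map_ne_zero_iff ι hι).2 (X_ne_zero 0)
  have hdet : ι (X 0) * (ι (X 0))⁻¹ - ι (X 1) * 0 = 1 := by
    rw [mul_inv_cancel₀ hX, mul_zero, sub_zero]
  have hcoord : sl2Lift _ _ _ _ hdet ∘ ![sx, sy] = ι ∘ X := by
    ext i
    fin_cases i
    · exact sl2Lift_sx hdet
    · exact sl2Lift_sy hdet
  refine AlgebraicIndependent.of_comp (sl2Lift _ _ _ _ hdet) ?_
  rw [hcoord]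
  exact (algebraicIndependent_X (Fin 2) ℂ).map' hι

/-- For the derivation `D` on `A = 𝒪(SL₂)` with `D x = D y = 0`, `D u = x`,
`D v = y`, the kernel of `D^{ν+1}` equals the ℂ-linear span of the monomials
`x^i y^j u^k v^ℓ` with `k + ℓ ≤ ν`. -/
theorem stmt8 (D : Derivation ℂ SL2R SL2R)
    (hx : D sx = 0) (hy : D sy = 0) (hu : D su = sx) (hv : D sv = sy) (ν : ℕ) :
    {a : SL2R | (⇑D)^[ν + 1] a = 0} =
      ↑(Submodule.span ℂ {a : SL2R | ∃ i j k l : ℕ,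
          k + l ≤ ν ∧ a = sx ^ i * sy ^ j * su ^ k * sv ^ l}) :=
  stmt8_general aeval_sl2_surjective sl2_det_eq_one algebraicIndependent_sx_sy D hx hy hu hv ν

end
end
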